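/- Let a > 0 be a real number, n ≥ 2, and let P ⊂ ℝ^n be an n-dimensional lattice polytope such that all n complex roots of its Ehrhart polynomial L_P have real part equal to -1/a. Then equality holds in #(P ∩ ℤ^n) ≤ ((a+1)^{n-2}(a+2)/a^{n-1}) · vol(P) + (a+1)^{n-2} if and only if at most one pair of complex conjugate roots of L_P has nonzero imaginary part. In particular, equality holds whenever n ∈ {2,3}. -/

import Mathlib

open MeasureTheory Polynomial Pointwise

/-- The number of integer lattice points contained in a subset of `ℝ^n`. -/
noncomputable def latticePointCount {n : ℕ} (S : Set (Fin n → ℝ)) : ℕ :=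
  {v : Fin n → ℤ | (fun i => (v i : ℝ)) ∈ S}.ncard

/-- A lattice polytope in `ℝ^n`: the convex hull of finitely many integer points. -/
def IsLatticePolytope {n : ℕ} (P : Set (Fin n → ℝ)) : Prop :=
  ∃ V : Finset (Fin n → ℤ),
    P = convexHull ℝ ((fun v : Fin n → ℤ => fun i => (v i : ℝ)) '' (V : Set (Fin n → ℤ)))

/-- `L` is the Ehrhart polynomial of `P`: for every positive integer `k` its value at `k`
is the number of lattice points of the dilate `kP`. -/
def IsEhrhartPoly {n : ℕ} (P : Set (Fin n → ℝ)) (L : Polynomial ℝ) : Prop :=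
  ∀ k : ℕ, 0 < k → L.eval (k : ℝ) = latticePointCount ((k : ℝ) • P)

open Classical in
theorem euler_one {ι : Type*} (s : Finset ι) (c : ι → ℤ) (K : ι → Set ℝ)
    (hK : ∀ i ∈ s, Convex ℝ (K i) ∧ IsCompact (K i))
    (h : ∀ x, (∑ i ∈ s with x ∈ K i, c i) = 0) :
    (∑ i ∈ s with (K i).Nonempty, c i) = 0 := by
  have key : ∀ t : ℝ, (∑ i ∈ s with (t ∈ K i ∧ sSup (K i) = t), c i) = 0 := by
    intro t
    have ev : ∀ᶠ u in nhdsWithin t (Set.Ioi t), ∀ i ∈ s,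
        (u ∈ K i ↔ t ∈ K i ∧ sSup (K i) ≠ t) := by
      rw [Filter.eventually_all_finset]
      intro i hi
      obtain ⟨hc, hk⟩ := hK i hi
      by_cases ht : t ∈ K i
      · have hle : t ≤ sSup (K i) := le_csSup hk.bddAbove ht
        rcases hle.eq_or_lt with he | hlt
        · filter_upwards [self_mem_nhdsWithin] with u hu
          have hu' : u ∉ K i := fun hu' => by
            have := le_csSup hk.bddAbove hu'
            have h2 : t < u := hu
            linarith
          simp [hu', ← he]
        · filter_upwards [Ioo_mem_nhdsGT hlt] with u hu
          have : u ∈ K i := hc.ordConnected.out ht (hk.sSup_mem ⟨t, ht⟩) ⟨hu.1.le, hu.2.le⟩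
          simp [this, ht, hlt.ne']
      · have : ∀ᶠ u in nhds t, u ∈ (K i)ᶜ := hk.isClosed.isOpen_compl.mem_nhds ht
        filter_upwards [nhdsWithin_le_nhds this] with u hu
        simp [ht]; exact hu
    obtain ⟨u, hu⟩ := ev.exists
    have h1 := h t
    have h2 := h u
    have h3 : (∑ i ∈ s with u ∈ K i, c i) = ∑ i ∈ s with (t ∈ K i ∧ sSup (K i) ≠ t), c i := by
      apply Finset.sum_congr _ (fun _ _ => rfl)
      apply Finset.filter_congr
      exact hu
    rw [h3] at h2
    have h4 := Finset.sum_filter_add_sum_filter_not (s.filter fun i => t ∈ K i)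
      (fun i => sSup (K i) = t) c
    rw [Finset.filter_filter, Finset.filter_filter, h1, h2] at h4
    simpa using h4
  rw [← Finset.sum_fiberwise_of_maps_to (t := s.image fun i => sSup (K i))
    (g := fun i => sSup (K i))]
  · apply Finset.sum_eq_zero
    intro t _
    rw [← key t, Finset.filter_filter]
    apply Finset.sum_congr _ (fun _ _ => rfl)
    apply Finset.filter_congr
    intro i hi
    constructor
    · rintro ⟨h1, h2⟩
      exact ⟨h2 ▸ (hK i hi).2.sSup_mem h1, h2⟩
    · rintro ⟨h1, h2⟩
      exact ⟨⟨t, h1⟩, h2⟩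
  · intro i hi
    exact Finset.mem_image_of_mem _ (Finset.mem_filter.1 hi).1

open Classical in
theorem euler_zero {ι : Type*} (s : Finset ι) (c : ι → ℤ) (d : ℕ) :
    ∀ (K : ι → Set (Fin d → ℝ))
    (_ : ∀ i ∈ s, Convex ℝ (K i) ∧ IsCompact (K i))
    (_ : ∀ x, (∑ i ∈ s with x ∈ K i, c i) = 0),
    (∑ i ∈ s with (K i).Nonempty, c i) = 0 := by
  induction d with
  | zero =>
    intro K hK h
    rw [← h 0]
    apply Finset.sum_congr _ (fun _ _ => rfl)
    apply Finset.filter_congr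
    intro i _
    constructor
    · rintro ⟨x, hx⟩
      rwa [Subsingleton.elim 0 x]
    · intro hx; exact ⟨0, hx⟩
  | succ d ih =>
    intro K hK h
    let p : (Fin (d+1) → ℝ) →ₗ[ℝ] ℝ := LinearMap.proj 0
    let q : (Fin (d+1) → ℝ) →ₗ[ℝ] (Fin d → ℝ) := LinearMap.funLeft ℝ ℝ Fin.succ
    have hp : Continuous p := continuous_apply 0
    have hq : Continuous q := q.continuous_of_finiteDimensional
    have hmem : ∀ (t : ℝ) (i : ι) (y : Fin d → ℝ),
        y ∈ q '' (K i ∩ p ⁻¹' {t}) ↔ (Fin.cons t y : Fin (d+1) → ℝ) ∈ K i := by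
      intro t i y
      constructor
      · rintro ⟨x, ⟨hx, hx0⟩, rfl⟩
        have : (Fin.cons t (q x) : Fin (d+1) → ℝ) = x := by
          ext j
          refine Fin.cases ?_ (fun j => ?_) j
          · simpa [p] using hx0.symm
          · simp [q, LinearMap.funLeft_apply]
        rwa [this]
      · intro hx
        refine ⟨_, ⟨hx, ?_⟩, ?_⟩
        · simp [p]
        · ext j; simp [q, LinearMap.funLeft_apply]
    have h1 := euler_one s c (fun i => p '' K i)
      (fun i hi => ⟨(hK i hi).1.linear_image p, (hK i hi).2.image hp⟩) ?_
    · simpa using h1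
    · intro t
      have h2 := ih (fun i => q '' (K i ∩ p ⁻¹' {t})) ?_ ?_
      · rw [← h2]
        apply Finset.sum_congr _ (fun _ _ => rfl)
        apply Finset.filter_congr
        intro i _
        simp only [Set.image_nonempty]
        constructor
        · rintro ⟨x, hx, rfl⟩; exact ⟨x, hx, rfl⟩
        · rintro ⟨x, hx, hx'⟩; exact ⟨x, hx, hx'⟩
      · intro i hi
        exact ⟨((hK i hi).1.inter ((convex_singleton t).linear_preimage p)).linear_image q,
          ((hK i hi).2.inter_right (isClosed_singleton.preimage hp)).image hq⟩
      · intro y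
        rw [← h (Fin.cons t y)]
        apply Finset.sum_congr _ (fun _ _ => rfl)
        apply Finset.filter_congr
        intro i _
        exact hmem t i y

/-- integer vectors as real vectors -/
def castVec {n : ℕ} (v : Fin n → ℤ) : Fin n → ℝ := fun i => (v i : ℝ)

theorem castVec_add {n : ℕ} (v w : Fin n → ℤ) : castVec (v + w) = castVec v + castVec w := by
  ext i; simp [castVec]

theorem castVec_sum {n : ℕ} {ι : Type*} (s : Finset ι) (v : ι → Fin n → ℤ) :
    castVec (∑ i ∈ s, v i) = ∑ i ∈ s, castVec (v i) := by
  ext i; simp [castVec, Finset.sum_apply]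

theorem finite_lattice {n : ℕ} {S : Set (Fin n → ℝ)} (hS : Bornology.IsBounded S) :
    {v : Fin n → ℤ | castVec v ∈ S}.Finite := by
  obtain ⟨C, hC⟩ := hS.exists_norm_le
  apply (Set.finite_Icc (fun _ : Fin n => -⌈C⌉) (fun _ => ⌈C⌉)).subset
  intro v hv
  have h1 : ∀ i, |(v i : ℝ)| ≤ ⌈C⌉ := fun i => by
    have := (norm_le_pi_norm (castVec v) i).trans (hC _ hv)
    exact (show |(v i : ℝ)| ≤ C from this).trans (Int.le_ceil C)
  constructor
  · intro i; have := (abs_le.1 (h1 i)).1; exact_mod_cast this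
  · intro i; have := (abs_le.1 (h1 i)).2; exact_mod_cast this

theorem mem_hull {N : ℕ} {E : Type*} [AddCommGroup E] [Module ℝ E] (v : Fin N → E) (x : E) :
    x ∈ convexHull ℝ (Set.range v) ↔
      ∃ w : Fin N → ℝ, (∀ i, 0 ≤ w i) ∧ ∑ i, w i = 1 ∧ ∑ i, w i • v i = x := by
  constructor
  · intro hx
    have : convexHull ℝ (Set.range v) ⊆ {x | ∃ w : Fin N → ℝ, (∀ i, 0 ≤ w i) ∧ ∑ i, w i = 1 ∧
        ∑ i, w i • v i = x} := by
      apply convexHull_min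
      · rintro _ ⟨i, rfl⟩
        refine ⟨Pi.single i 1, fun j => ?_, by simp, ?_⟩
        · by_cases h : j = i
          · subst h; simp
          · simp [h]
        · simp [Pi.single_apply]
      · rintro _ ⟨w, hw, hw1, rfl⟩ _ ⟨w', hw', hw1', rfl⟩ a b ha hb hab
        refine ⟨fun i => a * w i + b * w' i, fun i => ?_, ?_, ?_⟩
        · have := hw i; have := hw' i; positivity
        · rw [Finset.sum_add_distrib, ← Finset.mul_sum, ← Finset.mul_sum, hw1, hw1']; simpa
        · simp [add_smul, mul_smul, Finset.sum_add_distrib, Finset.smul_sum]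
    exact this hx
  · rintro ⟨w, hw, hw1, h⟩
    exact mem_convexHull_of_exists_fintype w v hw hw1 (fun i => Set.mem_range_self i) h

theorem mem_smul_hull {N : ℕ} (hN : 0 < N) {E : Type*} [AddCommGroup E] [Module ℝ E]
    (v : Fin N → E) (m : ℝ) (hm : 0 ≤ m) (x : E) :
    x ∈ m • convexHull ℝ (Set.range v) ↔
      ∃ w : Fin N → ℝ, (∀ i, 0 ≤ w i) ∧ ∑ i, w i = m ∧ ∑ i, w i • v i = x := by
  rw [Set.mem_smul_set]
  constructor
  · rintro ⟨y, hy, rfl⟩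
    obtain ⟨w, hw, hw1, rfl⟩ := (mem_hull v y).1 hy
    refine ⟨fun i => m * w i, fun i => mul_nonneg hm (hw i), ?_, ?_⟩
    · rw [← Finset.mul_sum, hw1, mul_one]
    · simp [mul_smul, Finset.smul_sum]
  · rintro ⟨w, hw, hw1, rfl⟩
    rcases hm.eq_or_lt with h0 | h0
    · refine ⟨v ⟨0, hN⟩, subset_convexHull _ _ (Set.mem_range_self _), ?_⟩
      rw [← h0] at hw1 ⊢
      rw [Finset.sum_eq_zero_iff_of_nonneg (fun i _ => hw i)] at hw1
      rw [Finset.sum_eq_zero (fun i hi => by rw [hw1 i hi, zero_smul]), zero_smul]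
    · refine ⟨∑ i, (m⁻¹ * w i) • v i, (mem_hull v _).2 ⟨fun i => m⁻¹ * w i, fun i => ?_, ?_, rfl⟩, ?_⟩
      · have := hw i; positivity
      · rw [← Finset.mul_sum, hw1, inv_mul_cancel₀ h0.ne']
      · rw [Finset.smul_sum]
        refine Finset.sum_congr rfl fun i _ => ?_
        rw [smul_smul, mul_inv_cancel_left₀ h0.ne']

/-- coefficient vectors representing `x` which are at least one on `S` -/
def coefSet {N n : ℕ} (v : Fin N → Fin n → ℝ) (x : Fin n → ℝ) (S : Finset (Fin N)) :
    Set (Fin N → ℝ) :=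
  {w | (∀ i, 0 ≤ w i) ∧ ∑ i, w i = N ∧ ∑ i, w i • v i = x ∧ ∀ i ∈ S, 1 ≤ w i}

theorem coefSet_convex {N n : ℕ} (v : Fin N → Fin n → ℝ) (x : Fin n → ℝ) (S : Finset (Fin N)) :
    Convex ℝ (coefSet v x S) := by
  rintro w ⟨h1, h2, h3, h4⟩ w' ⟨h1', h2', h3', h4'⟩ a b ha hb hab
  refine ⟨fun i => ?_, ?_, ?_, fun i hi => ?_⟩
  · have := h1 i; have := h1' i; simp only [Pi.add_apply, Pi.smul_apply, smul_eq_mul]; positivity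
  · simp only [Pi.add_apply, Pi.smul_apply, smul_eq_mul]
    rw [Finset.sum_add_distrib, ← Finset.mul_sum, ← Finset.mul_sum, h2, h2', ← add_mul, hab, one_mul]
  · simp only [Pi.add_apply, Pi.smul_apply, smul_eq_mul, add_smul, mul_smul]
    rw [Finset.sum_add_distrib, ← Finset.smul_sum, ← Finset.smul_sum, h3, h3', ← add_smul, hab,
      one_smul]
  · have := h4 i hi; have := h4' i hi; simp only [Pi.add_apply, Pi.smul_apply, smul_eq_mul]
    nlinarith

theorem coefSet_compact {N n : ℕ} (v : Fin N → Fin n → ℝ) (x : Fin n → ℝ) (S : Finset (Fin N)) :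
    IsCompact (coefSet v x S) := by
  have hcl : IsClosed (coefSet v x S) := by
    have : coefSet v x S = {w : Fin N → ℝ | ∀ i, 0 ≤ w i} ∩ ({w : Fin N → ℝ | ∑ i, w i = (N : ℝ)} ∩ ({w | ∑ i, w i • v i = x} ∩
      {w | ∀ i ∈ S, 1 ≤ w i})) := rfl
    rw [this]
    refine IsClosed.inter ?_ (IsClosed.inter ?_ (IsClosed.inter ?_ ?_))
    · simp only [Set.ofPred_forall]
      exact isClosed_iInter fun i => isClosed_le (by fun_prop) (by fun_prop)
    · exact isClosed_eq (by fun_prop) (by fun_prop)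
    · exact isClosed_eq (by fun_prop) (by fun_prop)
    · simp only [Set.ofPred_forall]
      exact isClosed_iInter fun i => isClosed_iInter fun _ => isClosed_le (by fun_prop) (by fun_prop)
  apply (isCompact_Icc (a := (0 : Fin N → ℝ)) (b := fun _ => (N : ℝ))).of_isClosed_subset hcl
  rintro w ⟨h1, h2, -, -⟩
  refine ⟨h1, fun i => ?_⟩
  rw [← h2]
  exact Finset.single_le_sum (fun j _ => h1 j) (Finset.mem_univ i)

theorem coefSet_nonempty_iff {N n : ℕ} (hN : 0 < N) (v : Fin N → Fin n → ℝ) (x : Fin n → ℝ)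
    (S : Finset (Fin N)) : (coefSet v x S).Nonempty ↔
      x - ∑ i ∈ S, v i ∈ ((N - S.card : ℕ) : ℝ) • convexHull ℝ (Set.range v) := by
  classical
  rw [mem_smul_hull hN v _ (Nat.cast_nonneg _)]
  have hcard : S.card ≤ N := by simpa using S.card_le_univ
  have hs1 : ∑ i, (if i ∈ S then (1 : ℝ) else 0) = S.card := by simp
  have hs2 : ∑ i, (if i ∈ S then (1 : ℝ) else 0) • v i = ∑ i ∈ S, v i := by
    simp [ite_smul]
  constructor
  · rintro ⟨w, h1, h2, h3, h4⟩
    refine ⟨fun i => w i - if i ∈ S then 1 else 0, fun i => ?_, ?_, ?_⟩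
    · by_cases hi : i ∈ S
      · simpa [hi] using h4 i hi
      · simpa [hi] using h1 i
    · rw [Finset.sum_sub_distrib, h2, hs1, Nat.cast_sub hcard]
    · simp only [sub_smul]
      rw [Finset.sum_sub_distrib, h3, hs2]
  · rintro ⟨w, h1, h2, h3⟩
    refine ⟨fun i => w i + if i ∈ S then 1 else 0, fun i => ?_, ?_, ?_, fun i hi => ?_⟩
    · have := h1 i; positivity
    · rw [Finset.sum_add_distrib, h2, hs1, Nat.cast_sub hcard]; ring
    · simp only [add_smul]
      rw [Finset.sum_add_distrib, h3, hs2]; simp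
    · simpa [hi] using h1 i

open Classical in
theorem coefSet_alt {N n : ℕ} (hN : 0 < N) (v : Fin N → Fin n → ℝ) (x : Fin n → ℝ) :
    (∑ S ∈ (Finset.univ : Finset (Fin N)).powerset with (coefSet v x S).Nonempty,
      (-1 : ℤ) ^ S.card) = 0 := by
  apply euler_zero _ (fun S : Finset (Fin N) => (-1 : ℤ) ^ S.card) N (fun S => coefSet v x S)
  · intro S _
    exact ⟨coefSet_convex v x S, coefSet_compact v x S⟩
  · intro w
    by_cases hw : w ∈ coefSet v x ∅
    · obtain ⟨h1, h2, h3, -⟩ := hw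
      have : (Finset.univ : Finset (Fin N)).powerset.filter (fun S => w ∈ coefSet v x S) =
          (Finset.univ.filter fun i => 1 ≤ w i).powerset := by
        ext S
        simp only [Finset.mem_filter, Finset.mem_powerset, true_and, coefSet,
          Set.mem_ofPred_eq, h1, h2, h3, implies_true, Finset.subset_iff, Finset.mem_univ]
      rw [this]
      apply Finset.sum_powerset_neg_one_pow_card_of_nonempty
      by_contra hne
      rw [Finset.not_nonempty_iff_eq_empty, Finset.filter_eq_empty_iff] at hne
      have : ∑ i, w i < ∑ i : Fin N, (1 : ℝ) := by
        apply Finset.sum_lt_sum_of_nonempty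
        · exact ⟨⟨0, hN⟩, Finset.mem_univ _⟩
        · intro i hi; exact not_le.1 (hne hi)
      rw [h2] at this
      simp at this
    · rw [Finset.filter_false_of_mem, Finset.sum_empty]
      intro S _ hS
      exact hw ⟨hS.1, hS.2.1, hS.2.2.1, by simp⟩

theorem count_alt {N n : ℕ} (hN : 0 < N) (v : Fin N → Fin n → ℤ) :
    (∑ S ∈ (Finset.univ : Finset (Fin N)).powerset, (-1 : ℤ) ^ S.card *
      (latticePointCount (((N - S.card : ℕ) : ℝ) •
        convexHull ℝ (Set.range fun i => castVec (v i))) : ℤ)) = 0 := by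
  classical
  set P := convexHull ℝ (Set.range fun i => castVec (v i)) with hP
  have hPb : Bornology.IsBounded P := by
    rw [hP, isBounded_convexHull]; exact (Set.finite_range _).isBounded
  let A : Finset (Fin N) → Set (Fin n → ℤ) := fun S =>
    {z | (coefSet (fun i => castVec (v i)) (castVec z) S).Nonempty}
  have hA : ∀ S, (A S).ncard = latticePointCount (((N - S.card : ℕ) : ℝ) • P) := by
    intro S
    have hinj := Set.ncard_image_of_injective
      {z : Fin n → ℤ | castVec z ∈ ((N - S.card : ℕ) : ℝ) • P} (add_left_injective (∑ i ∈ S, v i))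
    refine Eq.trans ?_ hinj
    congr 1
    ext z
    simp only [A, Set.mem_ofPred_eq, coefSet_nonempty_iff hN]
    rw [← castVec_sum]
    constructor
    · intro h
      refine ⟨z - ∑ i ∈ S, v i, ?_, by simp⟩
      have : castVec z - castVec (∑ i ∈ S, v i) = castVec (z - ∑ i ∈ S, v i) := by
        ext i; simp [castVec]
      rw [this] at h
      exact h
    · rintro ⟨y, hy, rfl⟩
      simp only [castVec_add, add_sub_cancel_right]
      exact hy
  have hfin : (A ∅).Finite := by
    have := finite_lattice (hPb.smul₀ (N : ℝ))
    apply this.subset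
    intro z hz
    have := (coefSet_nonempty_iff hN _ _ _).1 hz
    simpa using this
  have hsub : ∀ S, A S ⊆ A ∅ := by
    rintro S z ⟨w, hw⟩
    exact ⟨w, hw.1, hw.2.1, hw.2.2.1, by simp⟩
  have hcount : ∀ S, ((A S).ncard : ℤ) = ∑ z ∈ hfin.toFinset, if z ∈ A S then 1 else 0 := by
    intro S
    rw [Finset.sum_boole, ← Set.ncard_coe_finset]
    congr 2
    ext z
    simp only [Finset.coe_filter, Set.Finite.mem_toFinset, Set.mem_ofPred_eq]
    exact ⟨fun h => ⟨hsub S h, h⟩, fun h => h.2⟩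
  simp_rw [← hA, hcount, Finset.mul_sum]
  rw [Finset.sum_comm]
  apply Finset.sum_eq_zero
  intro z _
  refine Eq.trans ?_ (coefSet_alt hN (fun i => castVec (v i)) (castVec z))
  rw [Finset.sum_filter]
  apply Finset.sum_congr rfl
  intro S _
  simp [A]

theorem ehrhart_zero {n : ℕ} {P : Set (Fin n → ℝ)} (hP : IsLatticePolytope P)
    (hne : P.Nonempty) {L : Polynomial ℝ} (hL : IsEhrhartPoly P L) : L.eval 0 = 1 := by
  classical
  obtain ⟨V, hV⟩ := hP
  have hVne : V.Nonempty := by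
    by_contra h
    rw [Finset.not_nonempty_iff_eq_empty] at h
    subst h
    simp at hV
    exact hne.ne_empty hV
  set d := L.natDegree
  let e := Fintype.equivFin (V × Fin (d + 1))
  set N := Fintype.card (V × Fin (d + 1)) with hNdef
  have hNd : d < N := by
    rw [hNdef, Fintype.card_prod, Fintype.card_fin, Fintype.card_coe]
    have := hVne.card_pos
    nlinarith
  have hN : 0 < N := by omega
  let v : Fin N → Fin n → ℤ := fun i => (e.symm i).1.1
  have hPv : P = convexHull ℝ (Set.range fun i => castVec (v i)) := by
    rw [hV]
    congr 1
    ext x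
    constructor
    · rintro ⟨z, hz, rfl⟩
      exact ⟨e (⟨z, hz⟩, 0), by simp [v]; rfl⟩
    · rintro ⟨i, rfl⟩
      exact ⟨v i, (e.symm i).1.2, rfl⟩
  have h1 := count_alt hN v
  rw [← hPv] at h1
  rw [Finset.sum_powerset_apply_card
    (fun m => (-1 : ℤ) ^ m * (latticePointCount (((N - m : ℕ) : ℝ) • P) : ℤ))] at h1
  have h2 := congrFun (Polynomial.fwdDiff_iter_eq_zero_of_degree_lt hNd) 0
  rw [fwdDiff_iter_eq_sum_shift] at h2
  rw [← Finset.sum_range_reflect] at h2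
  simp only [nsmul_eq_mul] at h1
  have h1' := congrArg (Int.cast (R := ℝ)) h1
  push_cast at h1'
  simp only [Finset.card_univ, Fintype.card_fin] at h1'
  rw [Finset.sum_range_succ] at h1' h2
  have h0 : latticePointCount ((0 : ℝ) • P) = 1 := by
    unfold latticePointCount
    rw [Set.zero_smul_set hne, Set.ncard_eq_one]
    refine ⟨0, ?_⟩
    ext z
    simp only [Set.mem_ofPred_eq, Set.mem_singleton_iff, Set.mem_zero]
    constructor
    · intro h; ext i; have := congrFun h i; simpa using this
    · rintro rfl; ext i; simp
  have h3 : ∑ x ∈ Finset.range N, ((N.choose x) • ((-1 : ℝ) ^ x *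
      (latticePointCount (((N - x : ℕ) : ℝ) • P) : ℝ))) = ∑ j ∈ Finset.range N,
      (((-1 : ℤ) ^ (N - (N + 1 - 1 - j)) * (N.choose (N + 1 - 1 - j) : ℤ)) •
        Polynomial.eval (0 + (N + 1 - 1 - j) • (1 : ℝ)) L) := by
    apply Finset.sum_congr rfl
    intro x hx
    rw [Finset.mem_range] at hx
    have e1 : N + 1 - 1 - x = N - x := by omega
    have e2 : N - (N - x) = x := by omega
    rw [e1, e2, Nat.choose_symm hx.le]
    have := hL (N - x) (by omega)
    simp only [zero_add, nsmul_eq_mul, mul_one, zsmul_eq_mul]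
    rw [this]
    push_cast
    ring
  simp only [nsmul_eq_mul] at h2 h3
  simp only [Nat.sub_self, Nat.cast_zero, h0] at h1'
  have h4 := h1'
  rw [h3] at h4
  have h5 := h4.trans h2.symm
  simp at h5
  exact h5

theorem ehrhart_lead {n : ℕ} {P : Set (Fin n → ℝ)} (hP : IsLatticePolytope P)
    {L : Polynomial ℝ} (hL : IsEhrhartPoly P L) (hdeg : L.natDegree = n) (hL0 : L ≠ 0) :
    L.leadingCoeff = (volume P).toReal := by
  obtain ⟨V, hV⟩ := hP
  have hfin : ((fun v : Fin n → ℤ => fun i => (v i : ℝ)) '' (V : Set (Fin n → ℤ))).Finite :=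
    V.finite_toSet.image _
  have hcomp : IsCompact P := hV ▸ hfin.isCompact_convexHull ℝ
  have hconv : Convex ℝ P := hV ▸ convex_convexHull ℝ _
  have h1 := tendsto_card_div_pow_atTop_volume P hcomp.isBounded hcomp.isClosed.measurableSet
    (hconv.addHaar_frontier volume)
  have h2 := Polynomial.div_tendsto_atTop_leadingCoeff_div_of_degree_eq L (X ^ n : ℝ[X])
    (by rw [Polynomial.degree_eq_natDegree hL0, hdeg, Polynomial.degree_X_pow])
  have h3 := h2.comp (tendsto_natCast_atTop_atTop (R := ℝ))
  have h4 : L.leadingCoeff / (X ^ n : ℝ[X]).leadingCoeff = L.leadingCoeff := by simp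
  rw [h4] at h3
  refine tendsto_nhds_unique h3 (h1.congr' ?_)
  filter_upwards [Filter.eventually_gt_atTop 0] with k hk
  have hk' : (k : ℝ) ≠ 0 := by positivity
  simp only [Function.comp, Polynomial.eval_pow, Polynomial.eval_X, Fintype.card_fin]
  rw [hL k hk]
  congr 2
  unfold latticePointCount
  rw [Nat.card_coe_set_eq]
  have hinj : Function.Injective (fun v : Fin n → ℤ => (k : ℝ)⁻¹ • castVec v) := by
    intro v w h
    have h' := smul_right_injective (Fin n → ℝ) (inv_ne_zero hk') h
    ext i
    have := congrFun h' i
    simpa [castVec] using this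
  rw [← Set.ncard_image_of_injective _ hinj]
  congr 1
  ext x
  have hspan : ∀ y : Fin n → ℝ, y ∈ (Submodule.span ℤ (Set.range (Pi.basisFun ℝ (Fin n))) :
      Set (Fin n → ℝ)) ↔ ∃ v : Fin n → ℤ, castVec v = y := by
    intro y
    rw [SetLike.mem_coe, Module.Basis.mem_span_iff_repr_mem]
    constructor
    · intro h
      choose v hv using h
      exact ⟨v, by ext i; simpa [castVec] using hv i⟩
    · rintro ⟨v, rfl⟩ i
      exact ⟨v i, by simp [castVec]⟩
  constructor
  · rintro ⟨hx, y, hy, rfl⟩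
    obtain ⟨v, rfl⟩ := (hspan y).1 hy
    refine ⟨v, ?_, rfl⟩
    exact ⟨_, hx, by simp [smul_smul, hk']; rfl⟩
  · rintro ⟨v, ⟨y, hy, hv⟩, rfl⟩
    have hv' : castVec v = (k : ℝ) • y := hv.symm
    refine ⟨?_, castVec v, (hspan _).2 ⟨v, rfl⟩, rfl⟩
    simpa [hv', smul_smul, hk'] using hy

theorem prod_bound (s : ℝ) (h0 : 0 < s) (h1 : s < 1) (U : Multiset ℝ) (hU : ∀ u ∈ U, 0 < u) :
    1 ≤ (U.map fun u => 1 + u).prod ∧ (1 ≤ U.card → 1 < (U.map fun u => 1 + u).prod) ∧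
    (U.map fun u => 1 + s * u).prod ≤ 1 + s * ((U.map fun u => 1 + u).prod - 1) ∧
    (2 ≤ U.card →
      (U.map fun u => 1 + s * u).prod < 1 + s * ((U.map fun u => 1 + u).prod - 1)) := by
  induction U using Multiset.induction_on with
  | empty => simp
  | cons u U ih =>
    obtain ⟨i1, i2, i3, i4⟩ := ih (fun x hx => hU x (Multiset.mem_cons_of_mem hx))
    have hu := hU u (Multiset.mem_cons_self u U)
    simp only [Multiset.map_cons, Multiset.prod_cons, Multiset.card_cons]
    set Q := (U.map fun u => 1 + u).prod
    set T := (U.map fun u => 1 + s * u).prod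
    have hm : (1 + s * u) * T ≤ (1 + s * u) * (1 + s * (Q - 1)) :=
      mul_le_mul_of_nonneg_left i3 (by positivity)
    have e : 1 + s * ((1 + u) * Q - 1) - (1 + s * u) * (1 + s * (Q - 1)) =
      s * (1 - s) * u * (Q - 1) := by ring
    have hpos : 0 < s * (1 - s) * u := mul_pos (mul_pos h0 (by linarith)) hu
    refine ⟨by nlinarith, fun _ => by nlinarith, ?_, fun h => ?_⟩
    · have := mul_nonneg hpos.le (sub_nonneg.2 i1)
      linarith
    · have := mul_pos hpos (sub_pos.2 (i2 (by omega)))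
      linarith

theorem prod_eq_iff (s : ℝ) (h0 : 0 < s) (h1 : s < 1) (U : Multiset ℝ) (hU : ∀ u ∈ U, 0 < u) :
    (U.map fun u => 1 + s * u).prod = 1 + s * ((U.map fun u => 1 + u).prod - 1) ↔ U.card ≤ 1 := by
  constructor
  · intro h
    by_contra hc
    exact ((prod_bound s h0 h1 U hU).2.2.2 (by omega)).ne h
  · intro h
    interval_cases hc : U.card
    · rw [Multiset.card_eq_zero] at hc
      simp [hc]
    · obtain ⟨u, rfl⟩ := Multiset.card_eq_one.1 hc
      simp

theorem roots_decomp (L : Polynomial ℝ) (b : ℝ)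
    (hroots : ∀ z ∈ (L.map (algebraMap ℝ ℂ)).roots, z.re = b) :
    ∃ (M : Multiset ℂ) (k : ℕ), (∀ z ∈ M, z.re = b ∧ 0 < z.im) ∧
      (L.map (algebraMap ℝ ℂ)).roots =
        Multiset.replicate k (b : ℂ) + (M + M.map (starRingEnd ℂ)) ∧
      ((L.map (algebraMap ℝ ℂ)).roots.filter fun z => z.im ≠ 0) = M + M.map (starRingEnd ℂ) := by
  classical
  set R := (L.map (algebraMap ℝ ℂ)).roots with hR
  have hconj : R.map (starRingEnd ℂ) = R := by
    rw [hR, ← Polynomial.Splits.roots_map (IsAlgClosed.splits _), Polynomial.map_map]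
    congr 2
    ext x
    simp
  let M := R.filter fun z => 0 < z.im
  have hneg : (R.filter fun z => z.im < 0) = M.map (starRingEnd ℂ) := by
    conv_lhs => rw [← hconj]
    rw [Multiset.filter_map]
    congr 1
    apply Multiset.filter_congr
    intro z _
    simp
  have hne : (R.filter fun z => z.im ≠ 0) = M + M.map (starRingEnd ℂ) := by
    rw [← hneg]
    conv_lhs => rw [← Multiset.filter_add_not (fun z : ℂ => 0 < z.im)
      (R.filter fun z => z.im ≠ 0)]
    rw [Multiset.filter_filter, Multiset.filter_filter]
    congr 1
    · apply Multiset.filter_congr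
      intro z _
      exact ⟨fun h => h.1, fun h => ⟨h, h.ne'⟩⟩
    · apply Multiset.filter_congr
      intro z _
      exact ⟨fun h => lt_of_le_of_ne (not_lt.1 h.1) h.2, fun h => ⟨not_lt.2 h.le, h.ne⟩⟩
  refine ⟨M, (R.filter fun z => z.im = 0).card, ?_, ?_, hne⟩
  · intro z hz
    rw [Multiset.mem_filter] at hz
    exact ⟨hroots z hz.1, hz.2⟩
  · rw [← hne]
    conv_lhs => rw [← Multiset.filter_add_not (fun z : ℂ => z.im = 0) R]
    congr 1
    rw [Multiset.eq_replicate]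
    refine ⟨rfl, fun z hz => ?_⟩
    rw [Multiset.mem_filter] at hz
    apply Complex.ext
    · simpa using hroots z hz.1
    · simpa using hz.2

theorem eval_decomp (L : Polynomial ℝ) (b : ℝ) (M : Multiset ℂ) (k : ℕ)
    (hM : ∀ z ∈ M, z.re = b ∧ 0 < z.im)
    (hR : (L.map (algebraMap ℝ ℂ)).roots =
        Multiset.replicate k (b : ℂ) + (M + M.map (starRingEnd ℂ))) (t : ℝ) (htb : t - b ≠ 0) :
    L.eval t = L.leadingCoeff * (t - b) ^ (k + 2 * M.card) *
      (M.map fun z => 1 + z.im ^ 2 / (t - b) ^ 2).prod := by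
  have h1 := (IsAlgClosed.splits (L.map (algebraMap ℝ ℂ))).eval_eq_prod_roots (t : ℂ)
  have h2 : (L.map (algebraMap ℝ ℂ)).eval (t : ℂ) = ((L.eval t : ℝ) : ℂ) := by
    rw [Polynomial.eval_map]
    exact Polynomial.eval₂_at_apply (algebraMap ℝ ℂ) t
  rw [h2, hR, Polynomial.leadingCoeff_map] at h1
  simp only [Multiset.map_add, Multiset.prod_add, Multiset.map_replicate, Multiset.prod_replicate,
    Multiset.map_map] at h1
  rw [← Multiset.prod_map_mul] at h1
  have h3 : (M.map fun z => ((t : ℂ) - z) * ((fun r => (t : ℂ) - r) ∘ (starRingEnd ℂ)) z) =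
      (M.map fun z => (t - b) ^ 2 * (1 + z.im ^ 2 / (t - b) ^ 2)).map (fun x : ℝ => (x : ℂ)) := by
    rw [Multiset.map_map]
    apply Multiset.map_congr rfl
    intro z hz
    have hzb := (hM z hz).1
    simp only [Function.comp]
    have : (t - b) ^ 2 * (1 + z.im ^ 2 / (t - b) ^ 2) = (t - b) ^ 2 + z.im ^ 2 := by
      field_simp
    rw [this]
    apply Complex.ext
    · simp [hzb, pow_two]
    · simp [hzb, pow_two]; try ring
  rw [h3] at h1
  have h4 : ((M.map fun z => (t - b) ^ 2 * (1 + z.im ^ 2 / (t - b) ^ 2)).map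
      (fun x : ℝ => (x : ℂ))).prod =
      (((M.map fun z => (t - b) ^ 2 * (1 + z.im ^ 2 / (t - b) ^ 2)).prod : ℝ) : ℂ) :=
    (map_multiset_prod Complex.ofRealHom _).symm
  rw [h4, Multiset.prod_map_mul] at h1
  simp only [Multiset.map_const', Multiset.prod_replicate, Complex.coe_algebraMap] at h1
  have h5 : L.eval t = L.leadingCoeff * ((t - b) ^ k * (((t - b) ^ 2) ^ M.card *
      (M.map fun z => 1 + z.im ^ 2 / (t - b) ^ 2).prod)) := by
    exact_mod_cast h1
  rw [h5, pow_add, pow_mul]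
  ring

theorem lattice_points_eq_iff_of_roots_real_part (n : ℕ) (hn : 2 ≤ n) (a : ℝ) (ha : 0 < a)
    (P : Set (Fin n → ℝ))
    (hP : IsLatticePolytope P) (hfull : (interior P).Nonempty)
    (L : Polynomial ℝ) (hL : IsEhrhartPoly P L) (hdeg : L.natDegree = n)
    (hroots : ∀ z ∈ (L.map (algebraMap ℝ ℂ)).roots, z.re = -1 / a) :
    ((latticePointCount P : ℝ) =
        (a + 1) ^ (n - 2) * (a + 2) / a ^ (n - 1) * (volume P).toReal + (a + 1) ^ (n - 2) ↔
      ((L.map (algebraMap ℝ ℂ)).roots.filter fun z => z.im ≠ 0).card ≤ 2) ∧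
    ((n = 2 ∨ n = 3) →
      (latticePointCount P : ℝ) =
        (a + 1) ^ (n - 2) * (a + 2) / a ^ (n - 1) * (volume P).toReal + (a + 1) ^ (n - 2)) := by
  have hL0 : L ≠ 0 := by
    rintro rfl
    simp at hdeg
    omega
  have hne : P.Nonempty := hfull.mono interior_subset
  have hz := ehrhart_zero hP hne hL
  have hlead := ehrhart_lead hP hL hdeg hL0
  have hone := hL 1 one_pos
  rw [Nat.cast_one, one_smul] at hone
  obtain ⟨M, k, hM, hR, hF⟩ := roots_decomp L (-1 / a) hroots
  have hcard : k + 2 * M.card = n := by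
    have h1 := IsAlgClosed.card_roots_map_eq_natDegree_of_injective L
      (algebraMap ℝ ℂ).injective
    rw [hR, hdeg] at h1
    simp at h1
    omega
  have hFc : ((L.map (algebraMap ℝ ℂ)).roots.filter fun z => z.im ≠ 0).card = 2 * M.card := by
    rw [hF]; simp; omega
  have e0 := eval_decomp L (-1 / a) M k hM hR 0 (by
    have : 0 < 1 / a := by positivity
    rw [neg_div]; linarith)
  have e1 := eval_decomp L (-1 / a) M k hM hR 1 (by
    have : 0 < 1 / a := by positivity
    rw [neg_div]; linarith)
  rw [hcard, hz, hlead] at e0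
  rw [hcard, hone, hlead] at e1
  set c := (volume P).toReal
  let U : Multiset ℝ := M.map fun z => a ^ 2 * z.im ^ 2
  let s : ℝ := 1 / (a + 1) ^ 2
  have hUpos : ∀ u ∈ U, 0 < u := by
    intro u hu
    obtain ⟨z, hzM, rfl⟩ := Multiset.mem_map.1 hu
    have := (hM z hzM).2
    positivity
  have hs0 : 0 < s := by positivity
  have hs1 : s < 1 := by
    rw [div_lt_one (by positivity)]
    nlinarith
  have hQ : (M.map fun z => 1 + z.im ^ 2 / (0 - -1 / a) ^ 2) = U.map fun u => 1 + u := by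
    rw [Multiset.map_map]
    apply Multiset.map_congr rfl
    intro z _
    simp only [Function.comp]
    field_simp
    try ring
  have hT : (M.map fun z => 1 + z.im ^ 2 / (1 - -1 / a) ^ 2) = U.map fun u => 1 + s * u := by
    rw [Multiset.map_map]
    apply Multiset.map_congr rfl
    intro z _
    simp only [Function.comp, s]
    have : (1 : ℝ) - -1 / a = (a + 1) / a := by field_simp; ring
    rw [this]
    field_simp
  have hUc : U.card = M.card := Multiset.card_map _ _
  have hkey := prod_eq_iff s hs0 hs1 U hUpos
  rw [hUc] at hkey
  rw [hQ] at e0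
  rw [hT] at e1
  set Q := (U.map fun u => 1 + u).prod
  set T := (U.map fun u => 1 + s * u).prod
  have main : (latticePointCount P : ℝ) =
        (a + 1) ^ (n - 2) * (a + 2) / a ^ (n - 1) * c + (a + 1) ^ (n - 2) ↔ M.card ≤ 1 := by
    rw [← hkey, e1]
    have hb0 : (0 : ℝ) - -1 / a = 1 / a := by ring
    have hb1 : (1 : ℝ) - -1 / a = (a + 1) / a := by field_simp; ring
    rw [hb0] at e0
    rw [hb1]
    have hc : c ≠ 0 := by
      intro h; rw [h] at e0; simp at e0
    obtain ⟨m, rfl⟩ : ∃ m, n = m + 2 := ⟨n - 2, by omega⟩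
    have x1 : m + 2 - 2 = m := by omega
    have x2 : m + 2 - 1 = m + 1 := by omega
    rw [x1, x2]
    have hrhs : (a + 1) ^ m * (a + 2) / a ^ (m + 1) * c + (a + 1) ^ m =
        (c * ((a + 1) ^ (m + 2)) / a ^ (m + 2)) * (1 + s * (Q - 1)) := by
      have : (a + 1) ^ m * (a + 2) / a ^ (m + 1) * c + (a + 1) ^ m =
        (a + 1) ^ m * (a + 2) / a ^ (m + 1) * c + (a + 1) ^ m * (c * (1 / a) ^ (m + 2) * Q) := by
        rw [← e0, mul_one]
      rw [this]
      rw [one_div_pow]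
      simp only [s]
      field_simp
      ring
    rw [hrhs, div_pow, mul_div_assoc]
    have hcoef : c * ((a + 1) ^ (m + 2) / a ^ (m + 2)) ≠ 0 :=
      mul_ne_zero hc (by positivity)
    exact mul_right_inj' hcoef
  refine ⟨?_, fun h => main.2 (by omega)⟩
  rw [main, hFc]
  omega
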